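/- arXiv:1903.06159 — 6 statements merged into one kernel-verified Lean document; each statement's English description precedes it below -/
import Mathlib

section
/- Let α, β, γ, δ, q, u be complex numbers with u² = γδq². Then for every nonzero complex z, Φ⁺(u²/z) = (u⁴/z⁴)·Φ⁻(z) and Φ⁻(u²/z) = (u⁴/z⁴)·Φ⁺(z). In particular, whenever Φ⁻(u²/z) and Φ⁻(z) are nonzero, Φ⁺(u²/z)/Φ⁻(u²/z) = Φ⁻(z)/Φ⁺(z). -/
/-- `Φ⁺(z) = (z−αq)(z−βδq)(z−γq)(z−γδq)`. -/
noncomputable def PhiPlus (α β γ δ q z : ℂ) : ℂ :=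
  (z - α * q) * (z - β * δ * q) * (z - γ * q) * (z - γ * δ * q)

/-- `Φ⁻(z) = (αz−γδq)(βz−γq)(z−δq)(z−q)`. -/
noncomputable def PhiMinus (α β γ δ q z : ℂ) : ℂ :=
  (α * z - γ * δ * q) * (β * z - γ * q) * (z - δ * q) * (z - q)

/-!
If `w = u² / z`, then `z w = γδq²`. The four splittings `γδq² = s t` with `s = q`, `δq`, `γq`,
`γδq` turn `z` times each linear factor of `Φ⁺(w)` into `-s` times a factor of `Φ⁻(z)`, and
similarly with `Φ⁺` and `Φ⁻` exchanged. The four signs cancel, and the scalars `s` multiply to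
`(γδq²)² = u⁴`.
-/

section CommRing

variable {R : Type*} [CommRing R]

/-- The quartic `Φ⁺` over a commutative ring; for `R = ℂ` this is `PhiPlus`. -/
def phiPlus (α β γ δ q z : R) : R :=
  (z - α * q) * (z - β * δ * q) * (z - γ * q) * (z - γ * δ * q)

/-- The quartic `Φ⁻` over a commutative ring; for `R = ℂ` this is `PhiMinus`. It is not normalized
to be monic, so that `α` and `β` need not be invertible. -/
def phiMinus (α β γ δ q z : R) : R :=
  (α * z - γ * δ * q) * (β * z - γ * q) * (z - δ * q) * (z - q)

variable {γ δ q z w : R}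

theorem pow_four_mul_phiPlus (α β : R) (h : z * w = γ * δ * q ^ 2) :
    z ^ 4 * phiPlus α β γ δ q w = (γ * δ * q ^ 2) ^ 2 * phiMinus α β γ δ q z := by
  have hα : z * (w - α * q) = -q * (α * z - γ * δ * q) := by linear_combination h
  have hβ : z * (w - β * δ * q) = -(δ * q) * (β * z - γ * q) := by linear_combination h
  have hγ : z * (w - γ * q) = -(γ * q) * (z - δ * q) := by linear_combination h
  have hγδ : z * (w - γ * δ * q) = -(γ * δ * q) * (z - q) := by linear_combination h
  calc z ^ 4 * phiPlus α β γ δ q w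
      = z * (w - α * q) * (z * (w - β * δ * q)) * (z * (w - γ * q)) * (z * (w - γ * δ * q)) := by
        rw [phiPlus]; ring
    _ = (γ * δ * q ^ 2) ^ 2 * phiMinus α β γ δ q z := by
        rw [hα, hβ, hγ, hγδ, phiMinus]; ring

theorem pow_four_mul_phiMinus (α β : R) (h : z * w = γ * δ * q ^ 2) :
    z ^ 4 * phiMinus α β γ δ q w = (γ * δ * q ^ 2) ^ 2 * phiPlus α β γ δ q z := by
  have hα : z * (α * w - γ * δ * q) = -(γ * δ * q) * (z - α * q) := by linear_combination α * h
  have hβ : z * (β * w - γ * q) = -(γ * q) * (z - β * δ * q) := by linear_combination β * h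
  have hδ : z * (w - δ * q) = -(δ * q) * (z - γ * q) := by linear_combination h
  have hq : z * (w - q) = -q * (z - γ * δ * q) := by linear_combination h
  calc z ^ 4 * phiMinus α β γ δ q w
      = z * (α * w - γ * δ * q) * (z * (β * w - γ * q)) * (z * (w - δ * q)) * (z * (w - q)) := by
        rw [phiMinus]; ring
    _ = (γ * δ * q ^ 2) ^ 2 * phiPlus α β γ δ q z := by
        rw [hα, hβ, hδ, hq, phiPlus]; ring

end CommRing

section Field

variable {K : Type*} [Field K] {γ δ q u z : K}

theorem phiPlus_sq_div (α β : K) (hu : u ^ 2 = γ * δ * q ^ 2) (hz : z ≠ 0) :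
    phiPlus α β γ δ q (u ^ 2 / z) = u ^ 4 / z ^ 4 * phiMinus α β γ δ q z := by
  have hw : z * (u ^ 2 / z) = γ * δ * q ^ 2 := by rw [mul_div_cancel₀ _ hz, hu]
  rw [div_mul_eq_mul_div, eq_div_iff (pow_ne_zero 4 hz), mul_comm, pow_four_mul_phiPlus α β hw,
    ← hu, ← pow_mul]

theorem phiMinus_sq_div (α β : K) (hu : u ^ 2 = γ * δ * q ^ 2) (hz : z ≠ 0) :
    phiMinus α β γ δ q (u ^ 2 / z) = u ^ 4 / z ^ 4 * phiPlus α β γ δ q z := by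
  have hw : z * (u ^ 2 / z) = γ * δ * q ^ 2 := by rw [mul_div_cancel₀ _ hz, hu]
  rw [div_mul_eq_mul_div, eq_div_iff (pow_ne_zero 4 hz), mul_comm, pow_four_mul_phiMinus α β hw,
    ← hu, ← pow_mul]

theorem phiPlus_div_phiMinus_sq_div {α β : K} (hu : u ^ 2 = γ * δ * q ^ 2) (hz : z ≠ 0)
    (hΦ : phiMinus α β γ δ q (u ^ 2 / z) ≠ 0) :
    phiPlus α β γ δ q (u ^ 2 / z) / phiMinus α β γ δ q (u ^ 2 / z)
      = phiMinus α β γ δ q z / phiPlus α β γ δ q z := by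
  rw [phiMinus_sq_div α β hu hz] at hΦ ⊢
  rw [phiPlus_sq_div α β hu hz, mul_div_mul_left _ _ (left_ne_zero_of_mul hΦ)]

theorem stmt4_general (α β γ δ q u : K) (hu : u ^ 2 = γ * δ * q ^ 2) :
    (∀ z : K, z ≠ 0 →
      phiPlus α β γ δ q (u ^ 2 / z) = u ^ 4 / z ^ 4 * phiMinus α β γ δ q z ∧
      phiMinus α β γ δ q (u ^ 2 / z) = u ^ 4 / z ^ 4 * phiPlus α β γ δ q z) ∧
    (∀ z : K, z ≠ 0 → phiMinus α β γ δ q (u ^ 2 / z) ≠ 0 →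
      phiPlus α β γ δ q (u ^ 2 / z) / phiMinus α β γ δ q (u ^ 2 / z)
        = phiMinus α β γ δ q z / phiPlus α β γ δ q z) :=
  ⟨fun _ hz => ⟨phiPlus_sq_div α β hu hz, phiMinus_sq_div α β hu hz⟩,
    fun _ hz hΦ => phiPlus_div_phiMinus_sq_div hu hz hΦ⟩

end Field

theorem stmt4 (α β γ δ q u : ℂ) (hu2 : u ^ 2 = γ * δ * q ^ 2) :
    (∀ z : ℂ, z ≠ 0 →
      PhiPlus α β γ δ q (u ^ 2 / z) = u ^ 4 / z ^ 4 * PhiMinus α β γ δ q z ∧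
      PhiMinus α β γ δ q (u ^ 2 / z) = u ^ 4 / z ^ 4 * PhiPlus α β γ δ q z) ∧
    (∀ z : ℂ, z ≠ 0 → PhiMinus α β γ δ q (u ^ 2 / z) ≠ 0 → PhiMinus α β γ δ q z ≠ 0 →
      PhiPlus α β γ δ q (u ^ 2 / z) / PhiMinus α β γ δ q (u ^ 2 / z)
        = PhiMinus α β γ δ q z / PhiPlus α β γ δ q z) := by
  have ⟨transform, quotient⟩ := stmt4_general α β γ δ q u hu2
  exact ⟨transform, fun z hz hΦ _ => quotient z hz hΦ⟩
end

section
/- Let π_0, …, π_{N−1} be distinct complex numbers and ω(0), …, ω(N−1) nonzero complex numbers. Set Π(z) = ∏_{m=0}^{N−1}(z − π_m) and ρ_x = ω(x)^{-1} ∏_{0≤m≤N−1, m≠x}(π_x − π_m)^{-2}, and define the matrix function m_N(z) = [[Π(z), 0], [Π(z)·Σ_{x=0}^{N−1} ρ_x/(z−π_x), 1/Π(z)]]. Then: (1) the entries m_N^{11}, m_N^{21} are polynomials (in particular the (2,1) entry Π(z)Σρ_x/(z−π_x) has no poles) and m_N^{12} = 0; (2) for each x, the residue (jump) condition holds: the residue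 of m_N at the simple pole π_x equals lim_{z→π_x} m_N(z)·w(x), where w(x) = [[0, ω(x)],[0, 0]]; equivalently, lim_{z→π_x}(z−π_x)/Π(z) = ω(x)·ρ_x·∏_{m≠x}(π_x−π_m); and (3) m_N(z)·diag(z^{-N}, z^{N}) → I as z → ∞. -/
/-!
Write `Π` for the nodal polynomial, `Π(z) = ∏ (z - π_m)`. The function `Π(z) ∑ ρ_x / (z - π_x)` is
the barycentric form of a Lagrange interpolation polynomial on the `N` nodes, so it has degree
`< N`, while `Π` is monic of degree `N`; comparing these with `z ^ N` at infinity gives the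
normalization. The residue of `1 / Π` at `π_x` is the nodal weight `∏_{m ≠ x} (π_x - π_m)⁻¹`, and
`ρ_x` is `ω(x)⁻¹` times its square.
-/

open Bornology Filter Lagrange Polynomial
open scoped Asymptotics Topology

theorem tendsto_eval_mul_inv_pow_natDegree_cobounded {𝕜 : Type*} [NormedField 𝕜]
    (p : 𝕜[X]) :
    Tendsto (fun z ↦ p.eval z * (z ^ p.natDegree)⁻¹) (cobounded 𝕜) (𝓝 p.leadingCoeff) := by
  have equiv_leading : (fun z ↦ p.eval z * (z ^ p.natDegree)⁻¹) ~[cobounded 𝕜]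
      fun z ↦ p.leadingCoeff * z ^ p.natDegree * (z ^ p.natDegree)⁻¹ :=
    isEquivalent_cobounded_leading_monomial.mul .refl
  refine equiv_leading.tendsto_nhds_iff.mpr (tendsto_const_nhds.congr' ?_)
  filter_upwards [eventually_ne_cobounded 0] with z hz
  exact (mul_inv_cancel_right₀ (pow_ne_zero _ hz) _).symm

theorem tendsto_eval_mul_inv_pow_cobounded_of_degree_lt {𝕜 : Type*} [NormedField 𝕜]
    {p : 𝕜[X]} {n : ℕ} (hp : p.degree < n) :
    Tendsto (fun z ↦ p.eval z * (z ^ n)⁻¹) (cobounded 𝕜) (𝓝 0) := by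
  have hlt : p.degree < (X ^ n : 𝕜[X]).degree := by rwa [degree_X_pow]
  simpa [div_eq_mul_inv] using (isLittleO_cobounded_of_degree_lt hlt).tendsto_div_nhds_zero

theorem tendsto_lowerTriangular_mul_diagonal {α 𝕜 : Type*} [Field 𝕜] [TopologicalSpace 𝕜]
    [ContinuousInv₀ 𝕜] {l : Filter α} {f g h : α → 𝕜}
    (hf : Tendsto (fun a ↦ f a * (h a)⁻¹) l (𝓝 1))
    (hg : Tendsto (fun a ↦ g a * (h a)⁻¹) l (𝓝 0)) :
    Tendsto (fun a ↦ !![f a, 0; g a, (f a)⁻¹] * Matrix.diagonal ![(h a)⁻¹, h a]) l (𝓝 1) := by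
  have hf_inv : Tendsto (fun a ↦ (f a)⁻¹ * h a) l (𝓝 1) := by
    simpa [mul_comm] using hf.inv₀ one_ne_zero
  refine tendsto_pi_nhds.mpr fun i ↦ tendsto_pi_nhds.mpr fun j ↦ ?_
  simp only [Matrix.mul_diagonal]
  fin_cases i <;> fin_cases j
  · simpa using hf
  · simpa using tendsto_const_nhds
  · simpa using hg
  · simpa using hf_inv

section Nodal

variable {ι : Type*} [DecidableEq ι]

theorem eval_nodal_mul_sum_div_sub {F : Type*} [Field F] {s : Finset ι} {v : ι → F}
    (hv : Set.InjOn v s) (c : ι → F) {z : F} (hz : ∀ i ∈ s, z ≠ v i) :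
    (nodal s v).eval z * ∑ i ∈ s, c i / (z - v i) =
      (interpolate s v fun i ↦ c i / nodalWeight s v i).eval z := by
  rw [eval_interpolate_not_at_node _ hz]
  congr 1
  refine Finset.sum_congr rfl fun i hi ↦ ?_
  have := nodalWeight_ne_zero hv hi
  field

theorem tendsto_sub_div_eval_nodal {𝕜 : Type*} [Field 𝕜] [TopologicalSpace 𝕜]
    [IsTopologicalDivisionRing 𝕜] {s : Finset ι} {v : ι → 𝕜} (hv : Set.InjOn v s)
    {i : ι} (hi : i ∈ s) :
    Tendsto (fun z ↦ (z - v i) / (nodal s v).eval z) (𝓝[≠] v i) (𝓝 (nodalWeight s v i)) := by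
  have erase_ne_zero : (nodal (s.erase i) v).eval (v i) ≠ 0 := by
    simpa [nodalWeight_eq_eval_nodal_erase_inv] using nodalWeight_ne_zero hv hi
  rw [nodalWeight_eq_eval_nodal_erase_inv]
  refine ((nodal (s.erase i) v).continuousWithinAt.tendsto.inv₀ erase_ne_zero).congr' ?_
  filter_upwards [self_mem_nhdsWithin] with z hz
  rw [nodal_eq_mul_nodal_erase hi, eval_mul, eval_sub, eval_X, eval_C,
    div_mul_cancel_left₀ (sub_ne_zero.mpr hz)]

theorem prod_inv_sq_mul_prod_eq_nodalWeight {F : Type*} [Field F] (s : Finset ι) (v : ι → F)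
    (i : ι) :
    (∏ j ∈ s.erase i, ((v i - v j) ^ 2)⁻¹) * ∏ j ∈ s.erase i, (v i - v j) =
      nodalWeight s v i := by
  rw [← Finset.prod_mul_distrib, nodalWeight]
  refine Finset.prod_congr rfl fun j _ ↦ ?_
  field

end Nodal

theorem stmt9_general {𝕜 ι : Type*} [NormedField 𝕜] [DecidableEq ι] (s : Finset ι) (π : ι → 𝕜)
    (hπ : Set.InjOn π s) (ω : ι → 𝕜) (hω : ∀ x ∈ s, ω x ≠ 0)
    (Pprod : 𝕜 → 𝕜) (hPprod : ∀ z, Pprod z = ∏ m ∈ s, (z - π m))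
    (ρ : ι → 𝕜)
    (hρ : ∀ x ∈ s, ρ x = (ω x)⁻¹ * ∏ m ∈ s.erase x, ((π x - π m) ^ 2)⁻¹)
    (mN : 𝕜 → Matrix (Fin 2) (Fin 2) 𝕜)
    (hmN : ∀ z, mN z = !![Pprod z, 0; Pprod z * ∑ x ∈ s, ρ x / (z - π x), (Pprod z)⁻¹]) :
    ((∃ p : 𝕜[X], ∀ z, (∀ i ∈ s, z ≠ π i) →
        Pprod z * (∑ x ∈ s, ρ x / (z - π x)) = p.eval z) ∧
      (∃ p : 𝕜[X], ∀ z, Pprod z = p.eval z) ∧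
      (∀ z, mN z 0 1 = 0)) ∧
    (∀ x ∈ s, Tendsto (fun z ↦ (z - π x) / Pprod z) (𝓝[≠] π x)
      (𝓝 (ω x * ρ x * ∏ m ∈ s.erase x, (π x - π m)))) ∧
    Tendsto (fun z ↦ mN z * Matrix.diagonal ![(z ^ s.card)⁻¹, z ^ s.card]) (cobounded 𝕜)
      (𝓝 1) := by
  obtain rfl : Pprod = fun z ↦ (nodal s π).eval z := funext fun z ↦ by rw [hPprod, eval_nodal]
  set q := interpolate s π fun x ↦ ρ x / nodalWeight s π x
  have lower_left_eq (z) (hz : ∀ x ∈ s, z ≠ π x) :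
      (nodal s π).eval z * ∑ x ∈ s, ρ x / (z - π x) = q.eval z :=
    eval_nodal_mul_sum_div_sub hπ ρ hz
  refine ⟨⟨⟨_, lower_left_eq⟩, ⟨_, fun _ ↦ rfl⟩, fun z ↦ by simp [hmN]⟩, fun x hx ↦ ?_, ?_⟩
  · rw [hρ x hx, mul_inv_cancel_left₀ (hω x hx), prod_inv_sq_mul_prod_eq_nodalWeight]
    exact tendsto_sub_div_eval_nodal hπ hx
  · simp only [hmN]
    refine tendsto_lowerTriangular_mul_diagonal ?_ ?_
    · simpa [natDegree_nodal, nodal_monic.leadingCoeff] using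
        tendsto_eval_mul_inv_pow_natDegree_cobounded (nodal s π)
    · have degree_q : q.degree < s.card := degree_interpolate_lt _ hπ
      refine (tendsto_eval_mul_inv_pow_cobounded_of_degree_lt degree_q).congr' ?_
      filter_upwards [s.eventually_all.mpr fun i _ ↦ eventually_ne_cobounded (π i)] with z hz
      rw [lower_left_eq z hz]

theorem stmt9 (N : ℕ) (hN : 1 ≤ N) (π : Fin N → ℂ) (hπ : Function.Injective π)
    (ω : Fin N → ℂ) (hω : ∀ x, ω x ≠ 0)
    (Pprod : ℂ → ℂ) (hPprod : ∀ z, Pprod z = ∏ m, (z - π m))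
    (ρ : Fin N → ℂ)
    (hρ : ∀ x, ρ x = (ω x)⁻¹ * ∏ m ∈ Finset.univ.erase x, ((π x - π m) ^ 2)⁻¹)
    (mN : ℂ → Matrix (Fin 2) (Fin 2) ℂ)
    (hmN : ∀ z, mN z = !![Pprod z, 0; Pprod z * ∑ x, ρ x / (z - π x), (Pprod z)⁻¹]) :
    -- (1) the (1,1) and (2,1) entries are polynomials and the (1,2) entry vanishes
    ((∃ p : Polynomial ℂ, ∀ z : ℂ, (∀ i, z ≠ π i) →
        Pprod z * (∑ x, ρ x / (z - π x)) = p.eval z) ∧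
      (∃ p : Polynomial ℂ, ∀ z : ℂ, Pprod z = p.eval z) ∧
      (∀ z : ℂ, mN z 0 1 = 0)) ∧
    -- (2) the residue (jump) condition, in the equivalent form
    --     lim_{z→π_x} (z−π_x)/Π(z) = ω(x)·ρ_x·∏_{m≠x}(π_x−π_m)
    (∀ x : Fin N,
      Filter.Tendsto (fun z : ℂ => (z - π x) / Pprod z) (nhdsWithin (π x) {π x}ᶜ)
        (nhds (ω x * ρ x * ∏ m ∈ Finset.univ.erase x, (π x - π m)))) ∧
    -- (3) the asymptotic normalization m_N(z)·diag(z^{-N}, z^N) → I as z → ∞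
    Filter.Tendsto (fun z : ℂ => mN z * Matrix.diagonal ![(z ^ N)⁻¹, z ^ N])
      (Bornology.cobounded ℂ) (nhds 1) := by
  simpa using stmt9_general Finset.univ π hπ.injOn ω (by simpa using hω) Pprod hPprod ρ
    (by simpa using hρ) mN hmN
end

section
/- Let q and u be nonzero complex numbers, σ(z) = z + u²/(qz), π_m = σ(q^{-m}) for 0 ≤ m ≤ N−1, and Π(w) = ∏_{m=0}^{N−1}(w − π_m). Then for every nonzero complex z at which both sides are defined, Π(σ(z/q)) / Π(σ(z)) = q^{-N} · (z − q)(z − u² q^{N−1}) / ( (z − u² q^{-1})(z − q^{-N+1}) ); equivalently, Π(σ(z/q)) · (z − u²/q)(z − q^{-N+1}) = q^{-N}(z − q)(z − u² q^{N−1}) · Π(σ(z)). -/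
/-- The map `σ(z) = z + u²/(qz)`. -/
noncomputable def sigmaMap (q u z : ℂ) : ℂ := z + u ^ 2 / (q * z)

/-!
For `σ(z) = z + c / z`, where `c = u² / q`, the difference `σ(z) - σ(w)` vanishes at `z = w` and
at `z = c / w`, so `σ(z) - σ(w) = (z - w) (z - c / w) / z`. Hence `Π(σ(z))` is, up to the factor
`z ^ (-N)`, a product of linear factors whose zeros form the two geometric progressions `q ^ (-m)`
and `c q ^ m`. Replacing `z` by `z / q` shifts each progression by one step, in opposite directions,
so only their end terms survive in the quotient.
-/

section CommRing

variable {R : Type*} [CommRing R]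

/-- The homogeneous `q`-shifted factorial `(x - c)(x - c q) ⋯ (x - c q ^ (N - 1))`, which is
`x ^ N (c / x; q)_N` when `x` is invertible. The homogeneous form makes sense in any commutative
ring; here it collects the factors of `Π ∘ σ` that vanish along a geometric progression. -/
def qShiftedProd (c q : R) (N : ℕ) (x : R) : R := ∏ m ∈ Finset.range N, (x - c * q ^ m)

theorem pow_mul_qShiftedProd (c q : R) (N : ℕ) (x : R) :
    q ^ N * qShiftedProd c q N x = ∏ m ∈ Finset.range N, (q * x - c * q ^ (m + 1)) := by
  rw [qShiftedProd, Finset.pow_eq_prod_const, ← Finset.prod_mul_distrib]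
  exact Finset.prod_congr rfl fun m _ ↦ by ring

theorem pow_mul_qShiftedProd_mul_sub (c q : R) (N : ℕ) (x : R) :
    q ^ N * qShiftedProd c q N x * (q * x - c) =
      qShiftedProd c q N (q * x) * (q * x - c * q ^ N) := by
  let f (m : ℕ) : R := q * x - c * q ^ m
  calc
    q ^ N * qShiftedProd c q N x * (q * x - c)
    _ = (∏ m ∈ Finset.range N, f (m + 1)) * f 0 := by
      simp only [pow_mul_qShiftedProd, f, pow_zero, mul_one]
    _ = (∏ m ∈ Finset.range N, f m) * f N := by
      rw [← Finset.prod_range_succ', Finset.prod_range_succ]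

end CommRing

section Field

variable {K : Type*} [Field K] {q z : K}

/-- The Joukowski map `z ↦ z + c / z`. It is the map `σ` with `c = u² / q`; the single parameter
`c` spares the requirement that `q c` be a square. At `z = 0` it takes the junk value `0`. -/
def joukowskiMap (c z : K) : K := z + c / z

/-- The function `Π(w)`, whose zeros are the nodes `π_m = σ(q ^ (-m))` for `m < N`. -/
def nodeProd (c q : K) (N : ℕ) (w : K) : K :=
  ∏ m ∈ Finset.range N, (w - joukowskiMap c (q ^ m)⁻¹)

theorem joukowskiMap_sub_joukowskiMap (c : K) {w : K} (hz : z ≠ 0) (hw : w ≠ 0) :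
    joukowskiMap c z - joukowskiMap c w = (z - w) * (z - c / w) / z := by
  unfold joukowskiMap
  field_simp
  ring

theorem nodeProd_joukowskiMap (hq : q ≠ 0) (c : K) (N : ℕ) (hz : z ≠ 0) :
    nodeProd c q N (joukowskiMap c z) =
      qShiftedProd 1 q⁻¹ N z * qShiftedProd c q N z / z ^ N := by
  have factor (m : ℕ) : joukowskiMap c z - joukowskiMap c (q ^ m)⁻¹ =
      (z - 1 * q⁻¹ ^ m) * (z - c * q ^ m) / z := by
    rw [joukowskiMap_sub_joukowskiMap c hz (inv_ne_zero (pow_ne_zero m hq)), div_inv_eq_mul,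
      one_mul, inv_pow]
  simp only [nodeProd, factor, qShiftedProd, Finset.prod_div_distrib, Finset.prod_mul_distrib,
    Finset.prod_const, Finset.card_range]

theorem nodeProd_joukowskiMap_div_mul (hq : q ≠ 0) (c : K) (N : ℕ) (hz : z ≠ 0) :
    nodeProd c q N (joukowskiMap c (z / q)) * ((z - c) * (z - q ^ (1 - (N : ℤ)))) =
      q ^ (-(N : ℤ)) * ((z - q) * (z - c * q ^ N)) * nodeProd c q N (joukowskiMap c z) := by
  have shift_up : q ^ N * qShiftedProd c q N (z / q) * (z - c) =
      qShiftedProd c q N z * (z - c * q ^ N) := by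
    simpa only [mul_div_cancel₀ z hq] using pow_mul_qShiftedProd_mul_sub c q N (z / q)
  have shift_down : q⁻¹ ^ N * qShiftedProd 1 q⁻¹ N z * (z / q - 1) =
      qShiftedProd 1 q⁻¹ N (z / q) * (z / q - q⁻¹ ^ N) := by
    simpa only [inv_mul_eq_div, one_mul] using pow_mul_qShiftedProd_mul_sub 1 q⁻¹ N z
  have sub_zpow : z - q ^ (1 - (N : ℤ)) = q * (z / q - q⁻¹ ^ N) := by
    rw [zpow_sub₀ hq, zpow_one, zpow_natCast, mul_sub, mul_div_cancel₀ z hq, inv_pow,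
      div_eq_mul_inv]
  have sub_q : z - q = q * (z / q - 1) := by
    rw [mul_sub, mul_div_cancel₀ z hq, mul_one]
  rw [nodeProd_joukowskiMap hq c N (div_ne_zero hz hq), nodeProd_joukowskiMap hq c N hz]
  calc
    _ = q / z ^ N * (qShiftedProd 1 q⁻¹ N (z / q) * (z / q - q⁻¹ ^ N)) *
        (q ^ N * qShiftedProd c q N (z / q) * (z - c)) := by
      rw [sub_zpow, div_pow]
      field_simp
    _ = q / z ^ N * (q⁻¹ ^ N * qShiftedProd 1 q⁻¹ N z * (z / q - 1)) *
        (qShiftedProd c q N z * (z - c * q ^ N)) := by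
      rw [shift_down, shift_up]
    _ = _ := by
      rw [sub_q, zpow_neg, zpow_natCast, inv_pow]
      ring

theorem stmt10_general (hq : q ≠ 0) (c : K) (N : ℕ) :
    (∀ z : K, z ≠ 0 →
      nodeProd c q N (joukowskiMap c (z / q)) * ((z - c) * (z - q ^ (1 - (N : ℤ)))) =
        q ^ (-(N : ℤ)) * ((z - q) * (z - c * q ^ N)) * nodeProd c q N (joukowskiMap c z)) ∧
    (∀ z : K, z ≠ 0 → nodeProd c q N (joukowskiMap c z) ≠ 0 →
      z - c ≠ 0 → z - q ^ (1 - (N : ℤ)) ≠ 0 →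
      nodeProd c q N (joukowskiMap c (z / q)) / nodeProd c q N (joukowskiMap c z) =
        q ^ (-(N : ℤ)) * ((z - q) * (z - c * q ^ N)) / ((z - c) * (z - q ^ (1 - (N : ℤ))))) :=
  ⟨fun _ hz ↦ nodeProd_joukowskiMap_div_mul hq c N hz, fun _ hz hprod hc hqN ↦
    (div_eq_div_iff hprod (mul_ne_zero hc hqN)).mpr (nodeProd_joukowskiMap_div_mul hq c N hz)⟩

end Field

theorem sigmaMap_eq_joukowskiMap (q u z : ℂ) : sigmaMap q u z = joukowskiMap (u ^ 2 / q) z := by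
  rw [sigmaMap, joukowskiMap, div_div]

theorem stmt10 (q u : ℂ) (hq : q ≠ 0) (hu : u ≠ 0) (N : ℕ) (hN : 1 ≤ N) :
    (∀ z : ℂ, z ≠ 0 →
      (∏ m ∈ Finset.range N, (sigmaMap q u (z / q) - sigmaMap q u ((q ^ m)⁻¹)))
          * ((z - u ^ 2 / q) * (z - q ^ (1 - (N : ℤ))))
        = q ^ (-(N : ℤ)) * ((z - q) * (z - u ^ 2 * q ^ ((N : ℤ) - 1)))
          * ∏ m ∈ Finset.range N, (sigmaMap q u z - sigmaMap q u ((q ^ m)⁻¹))) ∧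
    (∀ z : ℂ, z ≠ 0 →
      (∏ m ∈ Finset.range N, (sigmaMap q u z - sigmaMap q u ((q ^ m)⁻¹))) ≠ 0 →
      z - u ^ 2 / q ≠ 0 → z - q ^ (1 - (N : ℤ)) ≠ 0 →
      (∏ m ∈ Finset.range N, (sigmaMap q u (z / q) - sigmaMap q u ((q ^ m)⁻¹)))
          / (∏ m ∈ Finset.range N, (sigmaMap q u z - sigmaMap q u ((q ^ m)⁻¹)))
        = q ^ (-(N : ℤ)) * ((z - q) * (z - u ^ 2 * q ^ ((N : ℤ) - 1)))
          / ((z - u ^ 2 / q) * (z - q ^ (1 - (N : ℤ))))) := by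
  have last_zero : u ^ 2 * q ^ ((N : ℤ) - 1) = u ^ 2 / q * q ^ N := by
    rw [zpow_sub_one₀ hq, zpow_natCast, div_eq_mul_inv, mul_assoc, mul_comm q⁻¹]
  simpa only [sigmaMap_eq_joukowskiMap, last_zero, nodeProd] using stmt10_general hq (u ^ 2 / q) N
end

section
/- Let ω be a nonzero complex number and set w = [[0, ω],[0, 0]]. Let T = [[t¹¹, t¹²],[t²¹, −t¹¹]] be a 2×2 complex matrix with (t¹¹)² + t¹²t²¹ = 0 and t¹¹ ≠ 0 (hence t¹², t²¹ ≠ 0). Let m and m′ be 2×2 complex matrices with entries m = [[m¹¹, m¹²],[m²¹, m²²]] such that: det m = 1, T·(m¹¹, m²¹)ᵀ = 0, and T·m − m·w = T·m′·w. Then −Tr( m^{-1} m′ w ) = −1 + ω·(m¹¹)² / t¹². -/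
/-!
Put `X = m - m' w`. It has the same first column as `m`, and the equation `T m - m w = T m' w` reads
`T X = m w`. As `w` has rank one, the matrix determinant lemma gives
`det X = det m * (1 - Tr (m⁻¹ m' w))`. On the other hand `T` annihilates the first column of `X`,
that of `w` being zero, so comparing the second columns of `T X (adj X) = (det X) T` gives
`det X = ω (m¹¹)² / t¹²`.
-/

open Matrix

section CommRing

variable {R : Type*} [CommRing R]

theorem det_sub_vecMulVec {n : Type*} [Fintype n] [DecidableEq n] {A : Matrix n n R}
    (hA : IsUnit A.det) (u v : n → R) :
    (A - vecMulVec u v).det = A.det * (1 - trace (A⁻¹ * vecMulVec u v)) := by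
  have hsum : A - vecMulVec u v = A + replicateCol Unit (-u) * replicateRow Unit v := by
    rw [← vecMulVec_eq, neg_vecMulVec, sub_eq_add_neg]
  have hentry : (1 + replicateRow Unit v * A⁻¹ * replicateCol Unit (-u)).det
      = 1 - v ⬝ᵥ A⁻¹ *ᵥ u := by
    rw [det_unique, Matrix.mul_assoc, ← replicateCol_mulVec, Matrix.add_apply, one_apply_eq,
      replicateRow_mul_replicateCol_apply, mulVec_neg, dotProduct_neg, ← sub_eq_add_neg]
  rw [hsum, det_add_replicateCol_mul_replicateRow hA, hentry, mul_vecMulVec, trace_vecMulVec,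
    dotProduct_comm]

theorem mul_apply_one_mul_eq_mul_det {l : Type*} {S : Matrix l (Fin 2) R}
    {A : Matrix (Fin 2) (Fin 2) R} {i : l} (h : (S * A) i 0 = 0) :
    (S * A) i 1 * A 0 0 = S i 1 * A.det := by
  have hadj : (S * A * A.adjugate) i 1 = S i 1 * A.det := by
    rw [Matrix.mul_assoc, mul_adjugate, Matrix.mul_smul, Matrix.mul_one, Matrix.smul_apply,
      smul_eq_mul, mul_comm]
  rw [← hadj, mul_apply (N := A.adjugate), Fin.sum_univ_two, h, zero_mul, zero_add]
  simp [adjugate_fin_two]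

theorem weight_mul_sq_eq_transition_mul_det {T m m' : Matrix (Fin 2) (Fin 2) R} {ω : R}
    (h : T * m - m * !![0, ω; 0, 0] = T * m' * !![0, ω; 0, 0]) :
    ω * m 0 0 ^ 2 = T 0 1 * (m - m' * !![0, ω; 0, 0]).det := by
  have hjump : T * (m - m' * !![0, ω; 0, 0]) = m * !![0, ω; 0, 0] := by
    rw [Matrix.mul_sub, ← Matrix.mul_assoc, ← h, sub_sub_cancel]
  have hcol : (T * (m - m' * !![0, ω; 0, 0])) 0 0 = 0 := by
    rw [hjump]
    simp [mul_apply]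
  have hfirst : (m - m' * !![0, ω; 0, 0]) 0 0 = m 0 0 := by
    simp [mul_apply]
  have hsecond : (m * !![0, ω; 0, 0]) 0 1 = m 0 0 * ω := by
    simp [mul_apply]
  rw [← mul_apply_one_mul_eq_mul_det hcol, hjump, hfirst, hsecond]
  ring

end CommRing

theorem stmt15_general {K : Type*} [Field K] {T m m' : Matrix (Fin 2) (Fin 2) K} {ω : K}
    (hT : T 0 1 ≠ 0) (hdet : m.det ≠ 0)
    (heq : T * m - m * !![0, ω; 0, 0] = T * m' * !![0, ω; 0, 0]) :
    -trace (m⁻¹ * m' * !![0, ω; 0, 0]) = -1 + ω * m 0 0 ^ 2 / (T 0 1 * m.det) := by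
  have hrank : (!![0, ω; 0, 0] : Matrix (Fin 2) (Fin 2) K) = vecMulVec ![ω, 0] ![0, 1] := by
    ext i j
    fin_cases i <;> fin_cases j <;> simp [vecMulVec_apply]
  have hresolvent : (m - m' * !![0, ω; 0, 0]).det
      = m.det * (1 - trace (m⁻¹ * m' * !![0, ω; 0, 0])) := by
    rw [hrank, mul_vecMulVec, det_sub_vecMulVec hdet.isUnit, ← mul_vecMulVec, Matrix.mul_assoc]
  rw [weight_mul_sq_eq_transition_mul_det heq, mul_div_mul_left _ _ hT, hresolvent,
    mul_div_cancel_left₀ _ hdet]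
  ring

theorem stmt15 (ω t11 t12 t21 : ℂ) (hω : ω ≠ 0) (ht11 : t11 ≠ 0)
    (hnil : t11 ^ 2 + t12 * t21 = 0)
    (m m' : Matrix (Fin 2) (Fin 2) ℂ) (hdet : m.det = 1)
    (hker : (!![t11, t12; t21, -t11] : Matrix (Fin 2) (Fin 2) ℂ).mulVec ![m 0 0, m 1 0] = 0)
    (heq : (!![t11, t12; t21, -t11] : Matrix (Fin 2) (Fin 2) ℂ) * m
        - m * (!![0, ω; 0, 0] : Matrix (Fin 2) (Fin 2) ℂ)
      = (!![t11, t12; t21, -t11] : Matrix (Fin 2) (Fin 2) ℂ) * m'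
        * (!![0, ω; 0, 0] : Matrix (Fin 2) (Fin 2) ℂ)) :
    -Matrix.trace (m⁻¹ * m' * (!![0, ω; 0, 0] : Matrix (Fin 2) (Fin 2) ℂ))
      = -1 + ω * (m 0 0) ^ 2 / t12 := by
  have ht12 : t12 ≠ 0 := by
    rintro rfl
    exact ht11 (by simpa using hnil)
  simpa [hdet] using stmt15_general (by simpa using ht12) (by simp [hdet]) heq
end

section
/- Let π_0 < π_1 < … < π_M be distinct real numbers, ω_0, …, ω_M > 0, fix 1 ≤ N ≤ M, and consider the N-point orthogonal polynomial ensemble P(S) = W(S)/Z with W(S) = ∏_{i<j∈S}(π_i−π_j)²∏_{i∈S}ω_i. Set ρ_x = ω_x^{-1} ∏_{0≤m≤N−1, m≠x}(π_x − π_m)^{-2} for 0 ≤ x ≤ N−1. Then the gap probabilities D_k = P(S ⊆ {0,…,k−1}) satisfy D_{N+1} = D_N · ( 1 + ω_N · ∏_{l=0}^{N−1}(π_N − π_l)² · Σ_{m=0}^{N−1} ρ_m/(π_N − π_m)² ); equivalently, D_{N+1} = ω_N · h_N · D_N · ∏_{l=0}^{N−1}(π_N − π_l)², where h_N = ρ_N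 + Σ_{m=0}^{N−1} ρ_m/(π_N − π_m)² and ρ_N = ω_N^{-1}∏_{l=0}^{N−1}(π_N − π_l)^{-2}. -/
/-! Deleting the point `m` from a configuration `B` divides its weight by everything the particle at
`m` contributes, that is, multiplies it by the dual weight of `m` in `B`. The configurations of
`#B - 1` particles inside `B` are exactly the deletions `B.erase m`, so their total weight is the
weight of `B` times the total dual weight of `B`. For `B = {0, …, N}` the weight of `B` is that of
`{0, …, N - 1}` times the contribution `ω N * ∏ l < N, (π N - π l) ^ 2` of the last particle, and
the dual weights of `B` are `ρ N` and `ρ m / (π N - π m) ^ 2` for `m < N`. -/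

open Finset

theorem sum_powersetCard_eq_sum_erase {ι R : Type*} [DecidableEq ι] [AddCommMonoid R]
    {B : Finset ι} {k : ℕ} (hk : k + 1 = #B) (f : Finset ι → R) :
    ∑ S ∈ B.powersetCard k, f S = ∑ m ∈ B, f (B.erase m) := by
  have deletions : B.powersetCard k = B.image B.erase := by
    ext S
    rw [mem_powersetCard, mem_image]
    constructor
    · rintro ⟨hSB, hS⟩
      obtain ⟨m, hm, rfl⟩ := exists_eq_insert_iff.2 ⟨hSB, hS ▸ hk⟩
      exact ⟨m, mem_insert_self m S, erase_insert hm⟩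
    · rintro ⟨m, hm, rfl⟩
      exact ⟨erase_subset m B, by rw [card_erase_of_mem hm, ← hk, Nat.add_sub_cancel]⟩
  rw [deletions, sum_image B.erase_injOn]

theorem filter_subset_powersetCard {ι : Type*} [DecidableEq ι] {B X : Finset ι} (hBX : B ⊆ X)
    (k : ℕ) : {S ∈ X.powersetCard k | S ⊆ B} = B.powersetCard k := by
  ext S
  simp only [mem_filter, mem_powersetCard]
  exact ⟨fun h ↦ ⟨h.2, h.1.2⟩, fun h ↦ ⟨⟨h.1.trans hBX, h.2⟩, h.1⟩⟩

section Weight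

variable {ι R : Type*} [LinearOrder ι] [CommRing R] (π ω : ι → R)

/-- The unnormalised probability of the configuration `S` in the discrete orthogonal polynomial
ensemble with nodes `π` and weights `ω`. -/
def ensembleWeight (S : Finset ι) : R :=
  (∏ p ∈ S ×ˢ S with p.1 < p.2, (π p.1 - π p.2) ^ 2) * ∏ i ∈ S, ω i

/-- The total weight of the configurations of `k` particles contained in `B`: the normalising
constant of the ensemble when `B` is the set of all nodes, and otherwise the unnormalised
probability that every particle lies in `B`. -/
def partitionFunction (k : ℕ) (B : Finset ι) : R :=
  ∑ S ∈ B.powersetCard k, ensembleWeight π ω S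

theorem ensembleWeight_insert {x : ι} {T : Finset ι} (hx : x ∉ T) :
    ensembleWeight π ω (insert x T) =
      ensembleWeight π ω T * (ω x * ∏ m ∈ T, (π x - π m) ^ 2) := by
  have split_by_order : ∏ m ∈ T, (π x - π m) ^ 2 =
      (∏ j ∈ T, if x < j then (π x - π j) ^ 2 else 1) *
        ∏ i ∈ T, if i < x then (π i - π x) ^ 2 else 1 := by
    rw [← prod_mul_distrib]
    refine prod_congr rfl fun m hm ↦ ?_
    rcases lt_or_gt_of_ne (ne_of_mem_of_not_mem hm hx) with h | h
    · rw [if_neg h.not_gt, if_pos h, one_mul, sub_sq_comm]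
    · rw [if_pos h, if_neg h.not_gt, mul_one]
  simp only [ensembleWeight, split_by_order, prod_filter, prod_product, prod_insert hx,
    prod_mul_distrib, lt_irrefl, if_false]
  ring

theorem partitionFunction_card (A : Finset ι) :
    partitionFunction π ω #A A = ensembleWeight π ω A := by
  rw [partitionFunction, powersetCard_self, sum_singleton]

end Weight

/-- The weight at `x` of the dual ensemble on the node set `B`, for which the probability of a
configuration is that of its complement in `B`. The paper's `ρ x` is the case
`B = {0, …, N - 1}`. -/
def dualWeight {ι K : Type*} [DecidableEq ι] [Field K] (π ω : ι → K) (B : Finset ι) (x : ι) : K :=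
  (ω x)⁻¹ * ∏ m ∈ B.erase x, ((π x - π m) ^ 2)⁻¹

section DualWeight

variable {ι K : Type*} [Field K] {π ω : ι → K}

theorem dualWeight_insert_self [DecidableEq ι] {a : ι} {A : Finset ι} (ha : a ∉ A) :
    dualWeight π ω (insert a A) a = dualWeight π ω A a := by
  rw [dualWeight, dualWeight, erase_insert ha, erase_eq_of_notMem ha]

theorem dualWeight_insert_of_ne [DecidableEq ι] {a m : ι} {A : Finset ι} (ha : a ∉ A)
    (hm : m ≠ a) :
    dualWeight π ω (insert a A) m = dualWeight π ω A m / (π a - π m) ^ 2 := by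
  have ha' : a ∉ A.erase m := fun h ↦ ha (mem_of_mem_erase h)
  rw [dualWeight, dualWeight, erase_insert_of_ne hm.symm, prod_insert ha', sub_sq_comm (π a),
    div_eq_mul_inv]
  ring

theorem sum_dualWeight_insert [DecidableEq ι] {a : ι} {A : Finset ι} (ha : a ∉ A) :
    ∑ m ∈ insert a A, dualWeight π ω (insert a A) m =
      dualWeight π ω A a + ∑ m ∈ A, dualWeight π ω A m / (π a - π m) ^ 2 := by
  rw [sum_insert ha, dualWeight_insert_self ha]
  exact congrArg _ (sum_congr rfl fun m hm ↦
    dualWeight_insert_of_ne ha (ne_of_mem_of_not_mem hm ha))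

theorem mul_prod_mul_dualWeight [DecidableEq ι] {B : Finset ι} {x : ι} (hx : x ∈ B)
    (hπ : Set.InjOn π B) (hω : ω x ≠ 0) :
    ω x * (∏ m ∈ B.erase x, (π x - π m) ^ 2) * dualWeight π ω B x = 1 := by
  have hprod : ∏ m ∈ B.erase x, (π x - π m) ^ 2 ≠ 0 := prod_ne_zero_iff.2 fun m hm ↦
    pow_ne_zero 2 (sub_ne_zero.2 (hπ.ne hx (mem_of_mem_erase hm) (ne_of_mem_erase hm).symm))
  rw [dualWeight, prod_inv_distrib, ← mul_inv, mul_inv_cancel₀ (mul_ne_zero hω hprod)]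

variable [LinearOrder ι]

theorem ensembleWeight_erase {B : Finset ι} {m : ι} (hm : m ∈ B) (hπ : Set.InjOn π B)
    (hω : ω m ≠ 0) :
    ensembleWeight π ω (B.erase m) = ensembleWeight π ω B * dualWeight π ω B m := by
  conv_rhs => rw [← insert_erase hm, ensembleWeight_insert π ω (notMem_erase m B),
    insert_erase hm, mul_assoc, mul_prod_mul_dualWeight hm hπ hω, mul_one]

theorem partitionFunction_eq_mul_sum_dualWeight {B : Finset ι} {k : ℕ} (hk : k + 1 = #B)
    (hπ : Set.InjOn π B) (hω : ∀ i ∈ B, ω i ≠ 0) :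
    partitionFunction π ω k B = ensembleWeight π ω B * ∑ m ∈ B, dualWeight π ω B m := by
  rw [partitionFunction, sum_powersetCard_eq_sum_erase hk, mul_sum]
  exact sum_congr rfl fun m hm ↦ ensembleWeight_erase hm hπ (hω m hm)

theorem stmt17_general {a : ι} {A : Finset ι} (ha : a ∉ A)
    (hπ : Set.InjOn π ↑(insert a A)) (hω : ∀ i ∈ insert a A, ω i ≠ 0) :
    partitionFunction π ω #A (insert a A) = partitionFunction π ω #A A *
      (1 + ω a * (∏ l ∈ A, (π a - π l) ^ 2) *
        ∑ m ∈ A, dualWeight π ω A m / (π a - π m) ^ 2) ∧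
    partitionFunction π ω #A (insert a A) =
      ω a * (dualWeight π ω A a + ∑ m ∈ A, dualWeight π ω A m / (π a - π m) ^ 2) *
        partitionFunction π ω #A A * ∏ l ∈ A, (π a - π l) ^ 2 := by
  have normalised : ω a * (∏ l ∈ A, (π a - π l) ^ 2) * dualWeight π ω A a = 1 := by
    simpa only [erase_insert ha, dualWeight_insert_self ha] using
      mul_prod_mul_dualWeight (mem_insert_self a A) hπ (hω a (mem_insert_self a A))
  rw [partitionFunction_eq_mul_sum_dualWeight (card_insert_of_notMem ha).symm hπ hω,
    sum_dualWeight_insert ha, ensembleWeight_insert π ω ha, partitionFunction_card]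
  constructor
  · linear_combination ensembleWeight π ω A * normalised
  · ring

end DualWeight

theorem stmt17 (M N : ℕ) (hN1 : 1 ≤ N) (hNM : N ≤ M)
    (π ω : ℕ → ℝ)
    (hπ : ∀ i j, i < j → j ≤ M → π i < π j)
    (hω : ∀ i ≤ M, 0 < ω i)
    (W : Finset ℕ → ℝ)
    (hW : ∀ S, W S = (∏ p ∈ (S ×ˢ S).filter (fun p => p.1 < p.2), (π p.1 - π p.2) ^ 2)
        * ∏ i ∈ S, ω i)
    (Z : ℝ) (hZ : Z = ∑ S ∈ (Finset.range (M + 1)).powersetCard N, W S)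
    (D : ℕ → ℝ)
    (hD : ∀ k, D k = (∑ S ∈ ((Finset.range (M + 1)).powersetCard N).filter
        (fun S => S ⊆ Finset.range k), W S) / Z)
    (ρ : ℕ → ℝ)
    (hρ : ∀ x ≤ N, ρ x = (ω x)⁻¹ * ∏ m ∈ (Finset.range N).erase x, ((π x - π m) ^ 2)⁻¹) :
    D (N + 1) = D N * (1 + ω N * (∏ l ∈ Finset.range N, (π N - π l) ^ 2)
        * ∑ m ∈ Finset.range N, ρ m / (π N - π m) ^ 2) ∧
    D (N + 1) = ω N * (ρ N + ∑ m ∈ Finset.range N, ρ m / (π N - π m) ^ 2) * D N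
        * ∏ l ∈ Finset.range N, (π N - π l) ^ 2 := by
  obtain rfl : W = ensembleWeight π ω := funext hW
  have hD' : ∀ k ≤ M + 1, D k = partitionFunction π ω N (range k) / Z := fun k hk ↦ by
    rw [hD, filter_subset_powersetCard (range_mono hk), partitionFunction]
  have hρ' : ∀ x ≤ N, ρ x = dualWeight π ω (range N) x := hρ
  have hsum : ∑ m ∈ range N, ρ m / (π N - π m) ^ 2 =
      ∑ m ∈ range N, dualWeight π ω (range N) m / (π N - π m) ^ 2 :=
    sum_congr rfl fun m hm ↦ by rw [hρ' m (mem_range.1 hm).le]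
  have hle : ∀ i ∈ insert N (range N), i ≤ M := fun i hi ↦
    (mem_range_succ_iff.1 (range_add_one ▸ hi)).trans hNM
  have hinj : Set.InjOn π ↑(insert N (range N)) :=
    StrictMonoOn.injOn fun i _ j hj hij ↦ hπ i j hij (hle j hj)
  obtain ⟨h₁, h₂⟩ := stmt17_general notMem_range_self hinj fun i hi ↦ (hω i (hle i hi)).ne'
  rw [card_range, ← range_add_one] at h₁ h₂
  rw [hD' (N + 1) (by omega), hD' N (by omega), hsum, hρ' N le_rfl]
  exact ⟨by rw [h₁, mul_div_right_comm], by rw [h₂]; ring⟩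
end

section
/- Let u, z₂, z₄ be complex numbers and x, y complex variables, and define f = (x − u(y−1) − z₂(y+1)) / (u²(y+1) − z₂(xy + u(y−1))) and g = (u²(y+1) − z₄(xy + u(y−1))) / (x − u(y−1) − z₄(y+1)). If u(y² + 1) = xy (i.e. the point (x,y) lies on the curve C₀) and all four denominators/numerators involved are nonzero, then f·g = 1. In other words, this change of variables maps the curve C₀ = V(u(y²+1) − xy) into the curve V(fg − 1). -/
/-! On the curve `u (y² + 1) = x y`, the polynomial `u² (y + 1) - z (x y + u (y - 1))` is `u y`
times `x - u (y - 1) - z (y + 1)` for every `z`. Hence `f` restricts to `1 / (u y)` and `g` to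
`u y`, independently of `z₂` and `z₄`. -/

theorem factorization_of_curve {R : Type*} [CommRing R] {u x y : R}
    (hcurve : u * (y ^ 2 + 1) = x * y) (z : R) :
    u ^ 2 * (y + 1) - z * (x * y + u * (y - 1)) = u * y * (x - u * (y - 1) - z * (y + 1)) := by
  linear_combination (u + z) * hcurve

section Field

variable {K : Type*} [Field K]

/-- The Painlevé coordinate `f` as a function of the spectral coordinates `(x, y)`, with the
parameter `z` in the role of `z₂`. It takes the junk value `0` where the denominator vanishes. -/
def painleveF (u z x y : K) : K :=
  (x - u * (y - 1) - z * (y + 1)) / (u ^ 2 * (y + 1) - z * (x * y + u * (y - 1)))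

/-- The Painlevé coordinate `g` as a function of the spectral coordinates `(x, y)`, with the
parameter `z` in the role of `z₄`. It takes the junk value `0` where the denominator vanishes. -/
def painleveG (u z x y : K) : K :=
  (u ^ 2 * (y + 1) - z * (x * y + u * (y - 1))) / (x - u * (y - 1) - z * (y + 1))

variable {u z x y : K}

theorem painleveF_eq_inv_of_curve (hcurve : u * (y ^ 2 + 1) = x * y)
    (hfd : u ^ 2 * (y + 1) - z * (x * y + u * (y - 1)) ≠ 0) :
    painleveF u z x y = (u * y)⁻¹ := by
  rw [factorization_of_curve hcurve] at hfd
  rw [painleveF, factorization_of_curve hcurve, div_mul_cancel_right₀ (right_ne_zero_of_mul hfd)]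

theorem painleveG_eq_mul_of_curve (hcurve : u * (y ^ 2 + 1) = x * y)
    (hgd : x - u * (y - 1) - z * (y + 1) ≠ 0) :
    painleveG u z x y = u * y := by
  rw [painleveG, factorization_of_curve hcurve, mul_div_cancel_right₀ _ hgd]

theorem stmt18_general {z₂ z₄ : K} (hcurve : u * (y ^ 2 + 1) = x * y)
    (hfd : u ^ 2 * (y + 1) - z₂ * (x * y + u * (y - 1)) ≠ 0)
    (hgd : x - u * (y - 1) - z₄ * (y + 1) ≠ 0) :
    painleveF u z₂ x y * painleveG u z₄ x y = 1 := by
  have huy : u * y ≠ 0 := left_ne_zero_of_mul (factorization_of_curve hcurve z₂ ▸ hfd)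
  rw [painleveF_eq_inv_of_curve hcurve hfd, painleveG_eq_mul_of_curve hcurve hgd,
    inv_mul_cancel₀ huy]

end Field

theorem stmt18 (u z₂ z₄ x y : ℂ)
    (hcurve : u * (y ^ 2 + 1) = x * y)
    (hfn : x - u * (y - 1) - z₂ * (y + 1) ≠ 0)
    (hfd : u ^ 2 * (y + 1) - z₂ * (x * y + u * (y - 1)) ≠ 0)
    (hgn : u ^ 2 * (y + 1) - z₄ * (x * y + u * (y - 1)) ≠ 0)
    (hgd : x - u * (y - 1) - z₄ * (y + 1) ≠ 0) :
    ((x - u * (y - 1) - z₂ * (y + 1)) / (u ^ 2 * (y + 1) - z₂ * (x * y + u * (y - 1))))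
      * ((u ^ 2 * (y + 1) - z₄ * (x * y + u * (y - 1))) / (x - u * (y - 1) - z₄ * (y + 1)))
      = 1 :=
  stmt18_general hcurve hfd hgd
end
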